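/- arXiv:2301.00743 — 4 statements merged into one kernel-verified Lean document; each statement's English description precedes it below -/
import Mathlib

section
/- Let K be a field of characteristic different from 2 and Q = (α,β/K) a quaternion algebra over K. Suppose q = q₀ + q₁i + q₂j + q₃k ∈ Q is not a scalar (q ∉ K·1) and r = r₀ + r₁i + r₂j + r₃k ∈ Q satisfies r² = q. Then r₀ ≠ 0, the element d := 2r₀² − q₀ satisfies d² = N(q), r₀² = (q₀ + d)/2, and moreover r₁ = q₁/(2r₀), r₂ = q₂/(2r₀), r₃ = q₃/(2r₀). -/
open Quaternion

/-!
Every quaternion satisfies its reduced characteristic equation `r² = tr(r) r - N(r)`. If `r² = q`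
is not a scalar, this forces `tr(r) ≠ 0`, and the equation can then be solved for the imaginary
coordinates of `r`. Its real part reads `N(r) = tr(r) r₀ - q₀`, which is `2r₀² - q₀` when
`i² = α`; so `d = N(r)`, and `d² = N(q)` is multiplicativity of the norm.
-/

section ReducedTraceNorm

variable {R : Type*} [CommRing R] {c₁ c₂ c₃ : R}

/-- The reduced trace `a + star a` of a quaternion algebra, as a linear form. The relation is
`i² = c₁ + c₂ i`, so that `i` itself has trace `c₂`. -/
def reducedTrace : ℍ[R,c₁,c₂,c₃] →ₗ[R] R :=
  (2 : R) • QuaternionAlgebra.reₗ c₁ c₂ c₃ + c₂ • QuaternionAlgebra.imIₗ c₁ c₂ c₃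

theorem reducedTrace_apply (a : ℍ[R,c₁,c₂,c₃]) :
    reducedTrace a = 2 * a.re + c₂ * a.imI :=
  rfl

theorem reducedTrace_eq_two_mul_re (a : ℍ[R,c₁,c₃]) : reducedTrace a = 2 * a.re := by
  rw [reducedTrace_apply, zero_mul, add_zero]

theorem reducedTrace_coe (x : R) : reducedTrace (x : ℍ[R,c₁,c₂,c₃]) = 2 * x := by
  simp only [reducedTrace_apply, QuaternionAlgebra.re_coe, QuaternionAlgebra.imI_coe, mul_zero,
    add_zero]

/-- The reduced norm `star a * a` of a quaternion algebra, as a multiplicative map to the scalars;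
the product is a scalar, which is read off as its real part. -/
def reducedNorm : ℍ[R,c₁,c₂,c₃] →* R where
  toFun a := (star a * a).re
  map_one' := by rw [star_one, one_mul, QuaternionAlgebra.re_one]
  map_mul' a b := by
    apply QuaternionAlgebra.coe_injective (c₁ := c₁) (c₂ := c₂) (c₃ := c₃)
    rw [QuaternionAlgebra.coe_mul, ← QuaternionAlgebra.star_mul_eq_coe]
    calc star (a * b) * (a * b)
        = star b * (star a * a) * b := by simp only [star_mul, mul_assoc]
      _ = star a * a * (star b * b) := by
        rw [a.star_mul_eq_coe, ← QuaternionAlgebra.coe_commutes, mul_assoc]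
      _ = _ := by rw [← a.star_mul_eq_coe, ← b.star_mul_eq_coe]

theorem coe_reducedNorm (a : ℍ[R,c₁,c₂,c₃]) :
    ((reducedNorm a : R) : ℍ[R,c₁,c₂,c₃]) = star a * a :=
  a.star_mul_eq_coe.symm

theorem reducedNorm_apply (a : ℍ[R,c₁,c₂,c₃]) :
    reducedNorm a = a.re ^ 2 + c₂ * a.re * a.imI - c₁ * a.imI ^ 2 - c₃ * a.imJ ^ 2
      - c₂ * c₃ * a.imJ * a.imK + c₁ * c₃ * a.imK ^ 2 := by
  change (star a * a).re = _
  simp only [QuaternionAlgebra.re_mul, QuaternionAlgebra.re_star, QuaternionAlgebra.imI_star,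
    QuaternionAlgebra.imJ_star, QuaternionAlgebra.imK_star]
  ring

theorem sq_eq_reducedTrace_smul_sub_reducedNorm (a : ℍ[R,c₁,c₂,c₃]) :
    a ^ 2 = reducedTrace a • a - ((reducedNorm a : R) : ℍ[R,c₁,c₂,c₃]) := by
  rw [coe_reducedNorm, a.star_eq_two_re_sub, sub_mul, QuaternionAlgebra.coe_mul_eq_smul,
    ← reducedTrace_apply, sub_sub_cancel, sq]

theorem re_sq_eq_reducedTrace_mul_sub_reducedNorm (a : ℍ[R,c₁,c₂,c₃]) :
    (a ^ 2).re = reducedTrace a * a.re - reducedNorm a := by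
  rw [sq_eq_reducedTrace_smul_sub_reducedNorm, QuaternionAlgebra.re_sub,
    QuaternionAlgebra.re_smul, QuaternionAlgebra.re_coe, smul_eq_mul]

theorem im_sq_eq_reducedTrace_smul (a : ℍ[R,c₁,c₂,c₃]) :
    (a ^ 2).im = reducedTrace a • a.im := by
  rw [sq_eq_reducedTrace_smul_sub_reducedNorm, QuaternionAlgebra.im_sub,
    QuaternionAlgebra.im_smul, QuaternionAlgebra.im_coe, sub_zero]

theorem reducedTrace_sq (a : ℍ[R,c₁,c₂,c₃]) :
    reducedTrace (a ^ 2) = reducedTrace a ^ 2 - 2 * reducedNorm a := by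
  rw [sq_eq_reducedTrace_smul_sub_reducedNorm, map_sub, map_smul, reducedTrace_coe,
    smul_eq_mul, ← sq]

theorem sq_mem_range_algebraMap_of_reducedTrace_eq_zero {a : ℍ[R,c₁,c₂,c₃]}
    (ha : reducedTrace a = 0) : a ^ 2 ∈ Set.range (algebraMap R ℍ[R,c₁,c₂,c₃]) := by
  refine ⟨-reducedNorm a, ?_⟩
  rw [sq_eq_reducedTrace_smul_sub_reducedNorm, ha, zero_smul, zero_sub,
    QuaternionAlgebra.coe_algebraMap, QuaternionAlgebra.coe_neg]

end ReducedTraceNorm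

theorem sqrt_of_noncentral_quaternion_form_general
    {K : Type*} [Field K] {c₁ c₂ c₃ : K} {q r : ℍ[K,c₁,c₂,c₃]}
    (hq : q ∉ Set.range (algebraMap K ℍ[K,c₁,c₂,c₃])) (hr : r ^ 2 = q) :
    reducedTrace r ≠ 0 ∧
    (reducedTrace r * r.re - q.re) ^ 2 = reducedNorm q ∧
    reducedTrace r ^ 2 = reducedTrace q + 2 * (reducedTrace r * r.re - q.re) ∧
    r.imI = q.imI / reducedTrace r ∧
    r.imJ = q.imJ / reducedTrace r ∧
    r.imK = q.imK / reducedTrace r := by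
  have htrace : reducedTrace r ≠ 0 := fun h ↦
    hq (hr ▸ sq_mem_range_algebraMap_of_reducedTrace_eq_zero h)
  have hnorm : reducedTrace r * r.re - q.re = reducedNorm r := by
    rw [← hr, re_sq_eq_reducedTrace_mul_sub_reducedNorm, sub_sub_cancel]
  have him : reducedTrace r • r.im = q.im := by rw [← hr, im_sq_eq_reducedTrace_smul]
  refine ⟨htrace, ?_, ?_, ?_, ?_, ?_⟩
  · rw [hnorm, ← map_pow, hr]
  · rw [hnorm, ← hr, reducedTrace_sq, sub_add_cancel]
  · exact eq_div_of_mul_eq htrace (by simpa [mul_comm] using congrArg (·.imI) him)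
  · exact eq_div_of_mul_eq htrace (by simpa [mul_comm] using congrArg (·.imJ) him)
  · exact eq_div_of_mul_eq htrace (by simpa [mul_comm] using congrArg (·.imK) him)

/-- Let `q ∈ (α,β/K)` be a non-scalar quaternion and `r` a square root of `q`. Then
`r₀ ≠ 0`, the element `d := 2r₀² − q₀` satisfies `d² = N(q)`, `r₀² = (q₀ + d)/2` and
`r₁ = q₁/(2r₀)`, `r₂ = q₂/(2r₀)`, `r₃ = q₃/(2r₀)`. -/
theorem sqrt_of_noncentral_quaternion_form
    {K : Type*} [Field K] (hchar : (2 : K) ≠ 0) (α β : K) (hα : α ≠ 0) (hβ : β ≠ 0)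
    (q r : ℍ[K, α, β]) (hq : q ∉ Set.range (algebraMap K ℍ[K, α, β]))
    (hr : r ^ 2 = q) :
    r.re ≠ 0 ∧
    (2 * r.re ^ 2 - q.re) ^ 2 =
      q.re ^ 2 - α * q.imI ^ 2 - β * q.imJ ^ 2 + α * β * q.imK ^ 2 ∧
    r.re ^ 2 = (q.re + (2 * r.re ^ 2 - q.re)) / 2 ∧
    r.imI = q.imI / (2 * r.re) ∧
    r.imJ = q.imJ / (2 * r.re) ∧
    r.imK = q.imK / (2 * r.re) := by
  obtain ⟨htrace, hnorm, hsq, him⟩ := sqrt_of_noncentral_quaternion_form_general hq hr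
  simp only [reducedTrace_eq_two_mul_re, reducedNorm_apply] at htrace hnorm hsq him
  refine ⟨right_ne_zero_of_mul htrace, by linear_combination hnorm, ?_, him⟩
  exact eq_div_of_mul_eq hchar (mul_left_cancel₀ hchar (by linear_combination hsq))
end

section
/- Let K be a field of characteristic different from 2 and Q = (α,β/K) a quaternion algebra over K. Let q = q₀ + q₁i + q₂j + q₃k ∈ Q and let d ∈ K satisfy d² = N(q). If r₀ ∈ K is nonzero and r₀² = (q₀ + d)/2, then the quaternion r = r₀ + (q₁/(2r₀))·i + (q₂/(2r₀))·j + (q₃/(2r₀))·k satisfies r² = q. -/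
open Quaternion

/-!
Since `2r₀² = q₀ + d`, the proposed root is `r = (q + d) / (2r₀)`. The identity
`q² = 2q₀q - N(q) = 2q₀q - d²` collapses `(q + d)²` to `2(q₀ + d)q = (2r₀)²q`.
-/

section Algebra

variable {R A : Type*} [CommRing R] [Ring A] [Algebra R A] {a x : A} {t d s : R}

theorem add_algebraMap_sq_eq_smul (ha : a ^ 2 = t • a - algebraMap R A (d ^ 2)) :
    (a + algebraMap R A d) ^ 2 = (t + 2 * d) • a :=
  calc (a + algebraMap R A d) ^ 2
      = a ^ 2 + (2 * d) • a + algebraMap R A (d ^ 2) := by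
        rw [(Algebra.commute_algebraMap_right d a).add_sq, mul_assoc, ← Algebra.commutes,
          ← Algebra.smul_def, mul_smul, two_mul, two_smul, map_pow]
    _ = (t + 2 * d) • a := by rw [ha, add_smul]; abel

theorem sq_eq_of_smul_eq_add_algebraMap (hs : IsSMulRegular A s)
    (ha : a ^ 2 = t • a - algebraMap R A (d ^ 2)) (hst : s ^ 2 = t + 2 * d)
    (hx : s • x = a + algebraMap R A d) : x ^ 2 = a := by
  apply hs.pow 2
  calc s ^ 2 • x ^ 2 = (s • x) ^ 2 := (smul_pow s x 2).symm
    _ = (t + 2 * d) • a := by rw [hx, add_algebraMap_sq_eq_smul ha]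
    _ = s ^ 2 • a := by rw [hst]

end Algebra

section QuaternionAlgebra

variable {R : Type*} [CommRing R] {c₁ c₂ c₃ : R}

theorem quaternionAlgebra_sq_eq_smul_sub (a : ℍ[R,c₁,c₂,c₃]) :
    a ^ 2 = (2 * a.re + c₂ * a.imI) • a - algebraMap R ℍ[R,c₁,c₂,c₃] (a * star a).re := by
  have mul_star_eq : a * star a = (2 * a.re + c₂ * a.imI) • a - a ^ 2 := by
    rw [QuaternionAlgebra.star_eq_two_re_sub, mul_sub, QuaternionAlgebra.mul_coe_eq_smul, sq]
  rw [QuaternionAlgebra.coe_algebraMap, ← QuaternionAlgebra.mul_star_eq_coe, mul_star_eq,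
    sub_sub_cancel]

theorem quaternionAlgebra_re_mul_star (a : ℍ[R,c₁,c₂,c₃]) :
    (a * star a).re = a.re ^ 2 + c₂ * a.re * a.imI - c₁ * a.imI ^ 2 - c₃ * a.imJ ^ 2
      - c₂ * c₃ * a.imJ * a.imK + c₁ * c₃ * a.imK ^ 2 := by
  simp only [QuaternionAlgebra.re_mul, QuaternionAlgebra.re_star, QuaternionAlgebra.imI_star,
    QuaternionAlgebra.imJ_star, QuaternionAlgebra.imK_star]
  ring

end QuaternionAlgebra

/-- Let `q ∈ (α,β/K)` and `d ∈ K` with `d² = N(q)`. If `r₀ ≠ 0` and `r₀² = (q₀ + d)/2`,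
then `r = r₀ + (q₁/(2r₀))i + (q₂/(2r₀))j + (q₃/(2r₀))k` satisfies `r² = q`. -/
theorem sqrt_of_noncentral_quaternion_correct
    {K : Type*} [Field K] (hchar : (2 : K) ≠ 0) (α β : K) (hα : α ≠ 0) (hβ : β ≠ 0)
    (q : ℍ[K, α, β]) (d : K)
    (hd : d ^ 2 = q.re ^ 2 - α * q.imI ^ 2 - β * q.imJ ^ 2 + α * β * q.imK ^ 2)
    (r₀ : K) (hr₀ : r₀ ≠ 0) (hsq : r₀ ^ 2 = (q.re + d) / 2) :
    (⟨r₀, q.imI / (2 * r₀), q.imJ / (2 * r₀), q.imK / (2 * r₀)⟩ : ℍ[K, α, β]) ^ 2 = q := by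
  have two_mul_sq : 2 * r₀ ^ 2 = q.re + d := by rw [hsq, mul_div_cancel₀ _ hchar]
  have two_mul_ne_zero : 2 * r₀ ≠ 0 := mul_ne_zero hchar hr₀
  have norm_eq : (q * star q).re = d ^ 2 := by rw [quaternionAlgebra_re_mul_star, hd]; ring
  have sq_eq : q ^ 2 = (2 * q.re) • q - algebraMap K ℍ[K,α,β] (d ^ 2) := by
    simpa only [norm_eq, zero_mul, add_zero] using quaternionAlgebra_sq_eq_smul_sub q
  have sq_scale : (2 * r₀) ^ 2 = 2 * q.re + 2 * d := by linear_combination 2 * two_mul_sq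
  have regular : IsSMulRegular ℍ[K,α,β] (2 * r₀) :=
    (IsUnit.mk0 _ two_mul_ne_zero).isSMulRegular _
  refine sq_eq_of_smul_eq_add_algebraMap regular sq_eq sq_scale ?_
  ext
  case re =>
    change 2 * r₀ * r₀ = q.re + d
    rw [mul_assoc, ← sq, two_mul_sq]
  all_goals simp [mul_div_cancel₀ _ two_mul_ne_zero]
end

section
/- Let K be a field of characteristic different from 2, let α, β ∈ K be nonzero, and let a ∈ K be nonzero with aα not a square in K. Then a is the square of a pure quaternion in the quaternion algebra (α,β/K) if and only if there exists a nonzero d ∈ K represented by both binary quadratic forms ⟨a, −α⟩ and ⟨β, −αβ⟩, i.e., d = ax² − αy² and d = βu² − αβv² for some x, y, u, v ∈ K. -/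
open Quaternion

/-!
Write `Q` for the form `⟨β, -αβ⟩`, so that squares of pure quaternions are the values of
`⟨α⟩ ⊥ Q`. From `a = α t² + Q v` one reads off the common value `d = a - α t² = Q v`, which is
nonzero because `aα` is not a square. Conversely, a common value gives `a x² = α y² + Q v`. If
`x ≠ 0`, divide by `x²`. If `x = 0`, then `(y, v)` is an isotropic vector of `⟨α⟩ ⊥ Q` outside the
radical, so `⟨α⟩ ⊥ Q` represents every element of `K`, in particular `a`.
-/

theorem pure_sq_eq_algebraMap_iff {R : Type*} [CommRing R] {α β a x y z : R} :
    (⟨0, x, y, z⟩ : ℍ[R, α, β]) ^ 2 = algebraMap R ℍ[R, α, β] a ↔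
      a = α * x ^ 2 + (β * y ^ 2 - α * β * z ^ 2) := by
  have pure_sq : (⟨0, x, y, z⟩ : ℍ[R, α, β]) ^ 2 =
      algebraMap R ℍ[R, α, β] (α * x ^ 2 + (β * y ^ 2 - α * β * z ^ 2)) := by
    rw [pow_two, QuaternionAlgebra.mk_mul_mk, QuaternionAlgebra.algebraMap_eq]
    ext <;> ring
  rw [pure_sq, QuaternionAlgebra.algebraMap_injective.eq_iff, eq_comm]

section CommRing

variable {R M : Type*} [CommRing R] [AddCommGroup M] [Module R M] {Q : QuadraticForm R M}

theorem mem_range_of_mul_sq_mem_range {a x : R} (hx : IsUnit x)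
    (h : a * x ^ 2 ∈ Set.range Q) : a ∈ Set.range Q := by
  obtain ⟨v, hv⟩ := h
  obtain ⟨y, hxy⟩ := hx.exists_right_inv
  refine ⟨y • v, ?_⟩
  calc
    Q (y • v) = a * (x * y) ^ 2 := by
      rw [QuadraticMap.map_smul, hv, smul_eq_mul]
      ring
    _ = a := by rw [hxy, one_pow, mul_one]

theorem surjective_of_isotropic_of_isUnit_polar {v w : M} (hv : Q v = 0)
    (hvw : IsUnit (QuadraticMap.polar Q v w)) : Function.Surjective Q := by
  intro a
  obtain ⟨b, hb⟩ := hvw.exists_right_inv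
  have on_line (t : R) : Q (t • v + w) = Q w + t * QuadraticMap.polar Q v w := by
    rw [QuadraticMap.map_add Q, QuadraticMap.map_smul, hv, QuadraticMap.polar_smul_left,
      smul_zero, zero_add, smul_eq_mul]
  refine ⟨((a - Q w) * b) • v + w, ?_⟩
  rw [on_line]
  linear_combination (a - Q w) * hb

end CommRing

section Field

variable {K V : Type*} [Field K] [AddCommGroup V] [Module K V] {Q : QuadraticForm K V}

theorem exists_eq_mul_sq_add_of_common_value (h2 : (2 : K) ≠ 0) {a α d : K} (hd : d ≠ 0)
    (hbinary : ∃ x y : K, d = a * x ^ 2 - α * y ^ 2) (hQ : ∃ v : V, d = Q v) :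
    ∃ (t : K) (v : V), a = α * t ^ 2 + Q v := by
  obtain ⟨x, y, hxy⟩ := hbinary
  obtain ⟨v, hv⟩ := hQ
  let P : QuadraticForm K (K × V) := (α • QuadraticMap.sq).prod Q
  have P_apply (t : K) (w : V) : P (t, w) = α * t ^ 2 + Q w := by
    simp [P, pow_two]
  have value : P (y, v) = a * x ^ 2 := by
    rw [P_apply]
    linear_combination hxy - hv
  suffices a ∈ Set.range P by
    obtain ⟨⟨t, w⟩, htw⟩ := this
    exact ⟨t, w, by rw [← htw, P_apply]⟩
  by_cases hx : x = 0
  · have isotropic : P (y, v) = 0 := by simp [value, hx]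
    have hαy : α * y ≠ 0 := by
      intro hαy
      exact hd (by linear_combination hxy + a * x * hx - y * hαy)
    have polar_eq : QuadraticMap.polar P (y, v) (1, 0) = 2 * (α * y) := by
      simp only [QuadraticMap.polar, Prod.mk_add_mk, add_zero, P_apply, QuadraticMap.map_zero]
      ring
    exact surjective_of_isotropic_of_isUnit_polar isotropic
      (polar_eq ▸ (mul_ne_zero h2 hαy).isUnit) a
  · exact mem_range_of_mul_sq_mem_range (Ne.isUnit hx) ⟨(y, v), value⟩

theorem exists_eq_mul_sq_add_iff_common_value (h2 : (2 : K) ≠ 0) {a α : K}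
    (hns : ¬∃ c : K, a * α = c ^ 2) :
    (∃ (t : K) (v : V), a = α * t ^ 2 + Q v) ↔
      ∃ d : K, d ≠ 0 ∧ (∃ x y : K, d = a * x ^ 2 - α * y ^ 2) ∧ ∃ v : V, d = Q v := by
  constructor
  · rintro ⟨t, v, htv⟩
    refine ⟨a - α * t ^ 2, ?_, ⟨1, t, by ring⟩, ⟨v, by linear_combination htv⟩⟩
    intro hd
    exact hns ⟨α * t, by linear_combination α * hd⟩
  · rintro ⟨d, hd, hbinary, hQ⟩
    exact exists_eq_mul_sq_add_of_common_value h2 hd hbinary hQ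

end Field

/-- Let `K` have characteristic ≠ 2, let `α, β, a ∈ K` be nonzero with `aα` not a square
in `K`. Then `a` is the square of a pure quaternion in `(α,β/K)` if and only if some
nonzero `d ∈ K` is represented by both binary forms `⟨a, −α⟩` and `⟨β, −αβ⟩`. -/
theorem central_square_iff_common_value
    {K : Type*} [Field K] (hchar : (2 : K) ≠ 0) (α β a : K)
    (hα : α ≠ 0) (hβ : β ≠ 0) (ha : a ≠ 0) (hns : ¬∃ c : K, a * α = c ^ 2) :
    (∃ q₁ q₂ q₃ : K,
        (⟨0, q₁, q₂, q₃⟩ : ℍ[K, α, β]) ^ 2 = algebraMap K ℍ[K, α, β] a) ↔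
      ∃ d : K, d ≠ 0 ∧ (∃ x y : K, d = a * x ^ 2 - α * y ^ 2) ∧
        (∃ u v : K, d = β * u ^ 2 - α * β * v ^ 2) := by
  let Q : QuadraticForm K (K × K) := (β • QuadraticMap.sq).prod ((-(α * β)) • QuadraticMap.sq)
  have Q_apply (u v : K) : Q (u, v) = β * u ^ 2 - α * β * v ^ 2 := by
    simp [Q, pow_two, sub_eq_add_neg]
  simpa only [pure_sq_eq_algebraMap_iff, Prod.exists, Q_apply] using
    exists_eq_mul_sq_add_iff_common_value (Q := Q) hchar hns
end

section
/- Let K be a field, let α, β, a ∈ K be nonzero, and let l₀, l₁, m₀, m₁ ∈ K with m₀ ≠ 0. If a·(m₀² − aα·m₁²) = β·(l₀² − α·l₁²), then the pure quaternion q = (a·m₁/m₀)·i + (l₀/m₀)·j + (l₁/m₀)·k in the quaternion algebra (α,β/K) satisfies q² = a. -/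
open Quaternion

theorem pure_quaternion_sq {R : Type*} [CommRing R] (α β x y z : R) :
    (⟨0, x, y, z⟩ : ℍ[R, α, β]) ^ 2 =
      algebraMap R ℍ[R, α, β] (α * x ^ 2 + β * y ^ 2 - α * β * z ^ 2) := by
  rw [pow_two, QuaternionAlgebra.mk_mul_mk, QuaternionAlgebra.algebraMap_eq]
  ext <;> ring

theorem pure_quaternion_sq_eq_mul_sq_iff {R : Type*} [CommRing R] (α β a l₀ l₁ m₀ m₁ : R) :
    (⟨0, a * m₁, l₀, l₁⟩ : ℍ[R, α, β]) ^ 2 = algebraMap R ℍ[R, α, β] (a * m₀ ^ 2) ↔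
      a * (m₀ ^ 2 - a * α * m₁ ^ 2) = β * (l₀ ^ 2 - α * l₁ ^ 2) := by
  rw [pure_quaternion_sq, QuaternionAlgebra.algebraMap_injective.eq_iff]
  constructor <;> intro h <;> linear_combination -h

theorem sqrt_of_central_from_two_norm_equations_general
    {R : Type*} [CommRing R] (α β a l₀ l₁ m₁ : R) (m₀ : Rˣ) :
    (⟨0, a * m₁ /ₚ m₀, l₀ /ₚ m₀, l₁ /ₚ m₀⟩ : ℍ[R, α, β]) ^ 2 = algebraMap R ℍ[R, α, β] a ↔
      a * ((m₀ : R) ^ 2 - a * α * m₁ ^ 2) = β * (l₀ ^ 2 - α * l₁ ^ 2) := by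
  have clear_denom : (⟨0, a * m₁ /ₚ m₀, l₀ /ₚ m₀, l₁ /ₚ m₀⟩ : ℍ[R, α, β]) =
      m₀⁻¹ • ⟨0, a * m₁, l₀, l₁⟩ := by
    ext <;> simp [divp, Units.smul_def, mul_comm]
  have scale_central : m₀ ^ 2 • algebraMap R ℍ[R, α, β] a =
      algebraMap R ℍ[R, α, β] (a * (m₀ : R) ^ 2) := by
    rw [Units.smul_def, Algebra.smul_def, ← map_mul, Units.val_pow_eq_pow_val, mul_comm]
  rw [clear_denom, smul_pow, inv_pow, inv_smul_eq_iff, scale_central,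
    pure_quaternion_sq_eq_mul_sq_iff]

/-- If `a·(m₀² − aα·m₁²) = β·(l₀² − α·l₁²)` with `m₀ ≠ 0`, then the pure quaternion
`q = (a·m₁/m₀)·i + (l₀/m₀)·j + (l₁/m₀)·k` in `(α,β/K)` satisfies `q² = a`. -/
theorem sqrt_of_central_from_two_norm_equations
    {K : Type*} [Field K] (α β a : K) (hα : α ≠ 0) (hβ : β ≠ 0) (ha : a ≠ 0)
    (l₀ l₁ m₀ m₁ : K) (hm₀ : m₀ ≠ 0)
    (h : a * (m₀ ^ 2 - a * α * m₁ ^ 2) = β * (l₀ ^ 2 - α * l₁ ^ 2)) :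
    (⟨0, a * m₁ / m₀, l₀ / m₀, l₁ / m₀⟩ : ℍ[K, α, β]) ^ 2 =
      algebraMap K ℍ[K, α, β] a := by
  simpa only [divp_mk0] using
    (sqrt_of_central_from_two_norm_equations_general α β a l₀ l₁ m₁ (Units.mk0 m₀ hm₀)).2 h
end
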